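/- For every Boolean function f and every p ∈ [0,1/2], E_{ρ~R_p}[L₂(f↾ρ) + 1] ≤ (L₂(f) + 1)^{γ(2p)}, where L₂(f) is the minimum leaf-size of a depth-2 AC⁰ formula computing f and γ(q) = log_{2/(1-q)}((1+q)/(1-q)). -/

import Mathlib

noncomputable def rpWeight {n : ℕ} (p : ℝ) (ρ : Fin n → Option Bool) : ℝ :=
  ∏ i, if ρ i = none then p else (1 - p) / 2

def restrictFun {n : ℕ} {V : Type} (f : (Fin n → Bool) → V) (ρ : Fin n → Option Bool) :
    (Fin n → Bool) → V :=
  fun x => f (fun i => (ρ i).getD (x i))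

/-- Satisfaction of a conjunctive clause (AND of literals). -/
def andClauseSat {n : ℕ} (C : Fin n → Option Bool) (x : Fin n → Bool) : Prop :=
  ∀ i : Fin n, ∀ b : Bool, C i = some b → x i = b

/-- Satisfaction of a disjunctive clause (OR of literals). -/
def orClauseSat {n : ℕ} (C : Fin n → Option Bool) (x : Fin n → Bool) : Prop :=
  ∃ i : Fin n, ∃ b : Bool, C i = some b ∧ x i = b

def clauseWidth {n : ℕ} (C : Fin n → Option Bool) : ℕ :=
  (Finset.univ.filter (fun i => C i ≠ none)).card

/-- `L₂(f)`: minimum leaf-size (number of literal occurrences) of a depth-2 AC⁰ formula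
(a DNF or a CNF) computing `f`. -/
noncomputable def L2size {n : ℕ} (f : (Fin n → Bool) → Bool) : ℕ :=
  sInf {m |
    (∃ F : List (Fin n → Option Bool),
      (∀ x, f x = true ↔ ∃ C ∈ F, andClauseSat C x) ∧ (F.map clauseWidth).sum = m) ∨
    (∃ F : List (Fin n → Option Bool),
      (∀ x, f x = true ↔ ∀ C ∈ F, orClauseSat C x) ∧ (F.map clauseWidth).sum = m)}

/-- The shrinkage exponent `γ(q) = log_{2/(1-q)}((1+q)/(1-q))`, extended continuously
by `γ(1) = 1`. -/
noncomputable def gamma (q : ℝ) : ℝ :=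
  if q = 1 then 1 else Real.logb (2 / (1 - q)) ((1 + q) / (1 - q))

/-!
The random restriction `R_p` is `R_{2p}` followed by `R_{1/2}`. The second stage turns gates into
leaves: under `R_{1/2}` a clause with `k` literals contributes `(k / 2) (3 / 4) ^ (k - 1) ≤ 1`
surviving literals on average, so the leaf-size of `g↾R_{1/2}` is on average at most the number
`F₂(g)` of clauses of `g`.

For the first stage put `q = 2p`, append the empty (always satisfied) clause to a DNF of `f`, and
read it as a decision list of length `N = F₂(f) + 1`. Then `F₂(f↾σ) + 1` is at most the number of
clauses that are still reachable, that is, can be the first satisfied clause. Overwriting `σ` by a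
reachable clause `C` of width `k` keeps it reachable, which bounds the probability of being
reachable by `((1 + q) / (1 - q)) ^ k * b`, where `b` is the probability that `σ` moreover
satisfies `C`. Since `b ≤ ((1 - q) / 2) ^ k` and `((1 - q) / 2) ^ (-γ) = (1 + q) / (1 - q)` for
`γ = γ(q)`, this is at most `b ^ (1 - γ)`. At most one reachable clause can be satisfied by `σ`, so
the numbers `b` sum to at most `1`, and by concavity the `N` powers `b ^ (1 - γ)` sum to at most
`N ^ γ`.
-/

theorem sum_prod_mul_comp {ι α β R : Type*} [Fintype ι] [DecidableEq ι] [Fintype α]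
    [Fintype β] [DecidableEq β] [CommSemiring R] (w : ι → α → R) (φ : ι → α → β)
    (G : (ι → β) → R) :
    ∑ ρ : ι → α, (∏ i, w i (ρ i)) * G (fun i => φ i (ρ i)) =
      ∑ τ : ι → β, (∏ i, ∑ a with φ i a = τ i, w i a) * G τ := by
  simp_rw [Finset.prod_univ_sum, Finset.sum_mul]
  rw [← Finset.sum_fiberwise Finset.univ fun (ρ : ι → α) i => φ i (ρ i)]
  refine Finset.sum_congr rfl fun τ _ => ?_
  have fiber_eq : Fintype.piFinset (fun i => {a | φ i a = τ i}) =
      ({ρ | (fun i => φ i (ρ i)) = τ} : Finset (ι → α)) := by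
    ext ρ
    simp [funext_iff]
  rw [fiber_eq]
  refine Finset.sum_congr rfl fun ρ hρ => ?_
  rw [(Finset.mem_filter.1 hρ).2]

theorem sum_rpow_one_sub_le {κ : Type*} (s : Finset κ) {b : κ → ℝ} {γ : ℝ} (hb : ∀ l ∈ s, 0 ≤ b l)
    (hsum : ∑ l ∈ s, b l ≤ 1) (hγ0 : 0 ≤ γ) (hγ1 : γ ≤ 1) :
    ∑ l ∈ s, b l ^ (1 - γ) ≤ (s.card : ℝ) ^ γ := by
  rcases s.eq_empty_or_nonempty with rfl | hs
  · simpa using Real.rpow_nonneg le_rfl γ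
  have hN : (0 : ℝ) < s.card := by exact_mod_cast hs.card_pos
  have weighted_am_gm : ∀ l ∈ s,
      b l ^ (1 - γ) * ((s.card : ℝ) ^ γ)⁻¹ ≤ (1 - γ) * b l + γ * (s.card : ℝ)⁻¹ := by
    intro l hl
    rw [← Real.inv_rpow hN.le]
    exact Real.geom_mean_le_arith_mean2_weighted (sub_nonneg.2 hγ1) hγ0 (hb l hl)
      (inv_nonneg.2 hN.le) (sub_add_cancel 1 γ)
  rw [← div_le_one (Real.rpow_pos_of_pos hN γ), div_eq_mul_inv, Finset.sum_mul]
  calc ∑ l ∈ s, b l ^ (1 - γ) * ((s.card : ℝ) ^ γ)⁻¹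
      ≤ ∑ l ∈ s, ((1 - γ) * b l + γ * (s.card : ℝ)⁻¹) := Finset.sum_le_sum weighted_am_gm
    _ = (1 - γ) * ∑ l ∈ s, b l + γ := by
        rw [Finset.sum_add_distrib, ← Finset.mul_sum, Finset.sum_const, nsmul_eq_mul]
        field_simp
    _ ≤ 1 := by linarith [mul_le_of_le_one_right (sub_nonneg.2 hγ1) hsum]

theorem mul_three_quarters_pow_le_two (k : ℕ) : (k : ℝ) * (3 / 4) ^ (k - 1) ≤ 2 := by
  rcases Nat.lt_or_ge k 3 with hk | hk
  · interval_cases k <;> norm_num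
  · induction k, hk using Nat.le_induction with
    | base => norm_num
    | succ k hk ih =>
      obtain ⟨j, rfl⟩ : ∃ j, k = j + 1 := ⟨k - 1, by omega⟩
      have hj : (2 : ℝ) ≤ j := by exact_mod_cast (by omega : 2 ≤ j)
      have hpow : (0 : ℝ) < (3 / 4) ^ j := by positivity
      simp only [Nat.add_sub_cancel, pow_succ] at ih ⊢
      push_cast at ih ⊢
      nlinarith [mul_nonneg (sub_nonneg.2 hj) hpow.le]

theorem gamma_nonneg {q : ℝ} (hq0 : 0 ≤ q) (hq1 : q ≤ 1) : 0 ≤ gamma q := by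
  rcases hq1.eq_or_lt with rfl | hq1
  · simp [gamma]
  have hpos : 0 < 1 - q := sub_pos.2 hq1
  rw [gamma, if_neg hq1.ne]
  apply Real.logb_nonneg
  · rw [lt_div_iff₀ hpos]; linarith
  · rw [le_div_iff₀ hpos]; linarith

theorem gamma_le_one {q : ℝ} (hq : -1 < q) (hq1 : q ≤ 1) : gamma q ≤ 1 := by
  rcases hq1.eq_or_lt with rfl | hq1
  · simp [gamma]
  have hpos : 0 < 1 - q := sub_pos.2 hq1
  have hbase : 1 < 2 / (1 - q) := by rw [lt_div_iff₀ hpos]; linarith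
  rw [gamma, if_neg hq1.ne, Real.logb_le_iff_le_rpow hbase (div_pos (by linarith) hpos),
    Real.rpow_one]
  gcongr
  linarith

theorem rpow_neg_gamma {q : ℝ} (hq : -1 < q) (hq1 : q < 1) :
    ((1 - q) / 2) ^ (-gamma q) = (1 + q) / (1 - q) := by
  have hpos : 0 < 1 - q := sub_pos.2 hq1
  have hbase : 1 < 2 / (1 - q) := by rw [lt_div_iff₀ hpos]; linarith
  rw [Real.rpow_neg (by positivity), ← Real.inv_rpow (by positivity), inv_div, gamma,
    if_neg hq1.ne]
  exact Real.rpow_logb (by positivity) hbase.ne' (div_pos (by linarith) hpos)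

section Expectation

variable {n : ℕ}

/-- The expectation of `G ρ` over a random restriction `ρ ~ R_p`, as a finite weighted sum; it is
an honest expectation only for `p ∈ [0, 1]`. -/
noncomputable def rpExpect (p : ℝ) (G : (Fin n → Option Bool) → ℝ) : ℝ :=
  ∑ ρ, rpWeight p ρ * G ρ

theorem rpWeight_nonneg {p : ℝ} (hp0 : 0 ≤ p) (hp1 : p ≤ 1) (ρ : Fin n → Option Bool) :
    0 ≤ rpWeight p ρ := by
  refine Finset.prod_nonneg fun i _ => ?_
  split_ifs <;> linarith

theorem rpExpect_mono {p : ℝ} (hp0 : 0 ≤ p) (hp1 : p ≤ 1) {G H : (Fin n → Option Bool) → ℝ}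
    (h : ∀ ρ, G ρ ≤ H ρ) : rpExpect p G ≤ rpExpect p H :=
  Finset.sum_le_sum fun ρ _ => mul_le_mul_of_nonneg_left (h ρ) (rpWeight_nonneg hp0 hp1 ρ)

theorem rpExpect_nonneg {p : ℝ} (hp0 : 0 ≤ p) (hp1 : p ≤ 1) {G : (Fin n → Option Bool) → ℝ}
    (h : ∀ ρ, 0 ≤ G ρ) : 0 ≤ rpExpect p G :=
  Finset.sum_nonneg fun ρ _ => mul_nonneg (rpWeight_nonneg hp0 hp1 ρ) (h ρ)

theorem rpExpect_sum {κ : Type*} (p : ℝ) (s : Finset κ) (G : κ → (Fin n → Option Bool) → ℝ) :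
    rpExpect p (fun ρ => ∑ l ∈ s, G l ρ) = ∑ l ∈ s, rpExpect p (G l) := by
  simp only [rpExpect, Finset.mul_sum]
  exact Finset.sum_comm

theorem rpExpect_prod (p : ℝ) (g : Fin n → Option Bool → ℝ) :
    rpExpect p (fun ρ => ∏ i, g i (ρ i)) =
      ∏ i, (p * g i none + (1 - p) / 2 * (g i (some true) + g i (some false))) := by
  simp only [rpExpect, rpWeight, ← Finset.prod_mul_distrib]
  rw [← Fintype.prod_sum fun i s => (if s = none then p else (1 - p) / 2) * g i s]
  simp [Fintype.sum_option, mul_add]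

theorem rpExpect_one (p : ℝ) : rpExpect p (fun _ : Fin n → Option Bool => 1) = 1 := by
  have h := rpExpect_prod p fun (_ : Fin n) _ => 1
  simp only [Finset.prod_const_one] at h
  rw [h]
  exact Finset.prod_eq_one fun i _ => by ring

theorem rpExpect_add_one (p : ℝ) (G : (Fin n → Option Bool) → ℝ) :
    rpExpect p (fun ρ => G ρ + 1) = rpExpect p G + 1 := by
  have total := rpExpect_one (n := n) p
  simp only [rpExpect, mul_add, Finset.sum_add_distrib] at total ⊢
  rw [total]

theorem rpExpect_le_one {p : ℝ} (hp0 : 0 ≤ p) (hp1 : p ≤ 1) {G : (Fin n → Option Bool) → ℝ}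
    (h : ∀ ρ, G ρ ≤ 1) : rpExpect p G ≤ 1 :=
  (rpExpect_mono hp0 hp1 h).trans_eq (rpExpect_one p)

/-- The restriction `σ` followed by `τ`: the bits fixed by `σ` win. It is also used to overwrite a
restriction `τ` by the literals of a clause `σ`. -/
def compRestriction (σ τ : Fin n → Option Bool) : Fin n → Option Bool :=
  fun i => (σ i).or (τ i)

theorem rpExpect_compRestriction (a b : ℝ) (G : (Fin n → Option Bool) → ℝ) :
    rpExpect a (fun σ => rpExpect b (fun τ => G (compRestriction σ τ))) = rpExpect (a * b) G := by
  let w : Option Bool → ℝ := fun s => if s = none then b else (1 - b) / 2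
  have conditional (σ : Fin n → Option Bool) : rpExpect b (fun τ => G (compRestriction σ τ)) =
      ∑ ρ : Fin n → Option Bool, (∏ i, ∑ s with (σ i).or s = ρ i, w s) * G ρ :=
    sum_prod_mul_comp (fun _ => w) (fun i s => (σ i).or s) G
  have weight (ρ : Fin n → Option Bool) :
      rpExpect a (fun σ => ∏ i, ∑ s with (σ i).or s = ρ i, w s) = rpWeight (a * b) ρ := by
    rw [rpExpect_prod a fun i t => ∑ s with t.or s = ρ i, w s, rpWeight]
    refine Finset.prod_congr rfl fun i _ => ?_
    simp only [w, Finset.sum_filter, Fintype.sum_option]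
    rcases ρ i with _ | _ | _ <;> simp <;> ring
  simp only [conditional, rpExpect_sum]
  refine Finset.sum_congr rfl fun ρ _ => ?_
  rw [← weight, rpExpect, rpExpect, Finset.sum_mul]
  simp only [mul_assoc]

end Expectation

section Clause

variable {n : ℕ}

/-- The assignment obtained from `x` by overwriting the coordinates fixed by the restriction `ρ`. -/
def applyRestriction (ρ : Fin n → Option Bool) (x : Fin n → Bool) : Fin n → Bool :=
  fun i => (ρ i).getD (x i)

/-- The restriction `ρ` falsifies no literal of the conjunctive clause `C`. -/
def Compatible (ρ C : Fin n → Option Bool) : Prop :=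
  ∀ i, C i = none ∨ ρ i = none ∨ ρ i = C i

instance (ρ C : Fin n → Option Bool) : Decidable (Compatible ρ C) :=
  inferInstanceAs (Decidable (∀ i, C i = none ∨ ρ i = none ∨ ρ i = C i))

/-- The restriction `ρ` fixes every literal of the conjunctive clause `C` to true. -/
def Extends (ρ C : Fin n → Option Bool) : Prop :=
  ∀ i, C i = none ∨ ρ i = C i

instance (ρ C : Fin n → Option Bool) : Decidable (Extends ρ C) :=
  inferInstanceAs (Decidable (∀ i, C i = none ∨ ρ i = C i))

/-- The literals of `C` on coordinates left free by `ρ`. For a conjunctive clause this is the clause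
`C↾ρ` only if `ρ` is compatible with `C`; otherwise `C↾ρ` is constantly false. -/
def restrictClause (ρ C : Fin n → Option Bool) : Fin n → Option Bool :=
  fun i => if ρ i = none then C i else none

theorem restrictFun_compRestriction {V : Type} (f : (Fin n → Bool) → V)
    (σ τ : Fin n → Option Bool) :
    restrictFun f (compRestriction σ τ) = restrictFun (restrictFun f σ) τ := by
  funext x
  refine congrArg f (funext fun i => ?_)
  rcases h : σ i with _ | _ <;> simp [compRestriction, h]

theorem andClauseSat_applyRestriction (ρ C : Fin n → Option Bool) (x : Fin n → Bool) :
    andClauseSat C (applyRestriction ρ x) ↔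
      Compatible ρ C ∧ andClauseSat (restrictClause ρ C) x := by
  simp only [andClauseSat, Compatible, applyRestriction, restrictClause, ← forall_and]
  refine forall_congr' fun i => ?_
  rcases C i with _ | _ <;> rcases ρ i with _ | _ <;> simp

theorem Extends.andClauseSat {ρ C : Fin n → Option Bool} (h : Extends ρ C) (x : Fin n → Bool) :
    andClauseSat C (applyRestriction ρ x) := by
  intro i b hb
  have hρ : ρ i = some b := by simpa [hb] using h i
  simp [applyRestriction, hρ]

theorem applyRestriction_compRestriction_of_andClauseSat {ρ C : Fin n → Option Bool}
    {x : Fin n → Bool} (h : andClauseSat C (applyRestriction ρ x)) :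
    applyRestriction (compRestriction C ρ) x = applyRestriction ρ x := by
  funext i
  rcases hC : C i with _ | b
  · simp [applyRestriction, compRestriction, hC]
  · rw [h i b hC]
    simp [applyRestriction, compRestriction, hC]

theorem rpExpect_extends (q : ℝ) (C : Fin n → Option Bool) :
    rpExpect q (fun ρ => if Extends ρ C then 1 else 0) = ((1 - q) / 2) ^ clauseWidth C := by
  have factor (ρ : Fin n → Option Bool) : (if Extends ρ C then (1 : ℝ) else 0) =
      ∏ i, if C i = none ∨ ρ i = C i then 1 else 0 := by
    simp only [Finset.prod_ite_zero, Finset.prod_const_one, Finset.mem_univ, true_imp_iff]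
    rfl
  simp only [factor]
  rw [rpExpect_prod q fun i s => if C i = none ∨ s = C i then 1 else 0, clauseWidth,
    ← Finset.prod_const, Finset.prod_filter]
  refine Finset.prod_congr rfl fun i _ => ?_
  rcases C i with _ | _ | _ <;> simp
  ring

theorem rpExpect_compatible_and_eq_none (q : ℝ) {C : Fin n → Option Bool} {i : Fin n}
    (hi : C i ≠ none) :
    rpExpect q (fun ρ => if Compatible ρ C ∧ ρ i = none then 1 else 0) =
      q * ((1 + q) / 2) ^ (clauseWidth C - 1) := by
  have factor (ρ : Fin n → Option Bool) : (if Compatible ρ C ∧ ρ i = none then (1 : ℝ) else 0) =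
      ∏ j, if (C j = none ∨ ρ j = none ∨ ρ j = C j) ∧ (j = i → ρ j = none) then 1 else 0 := by
    simp only [Finset.prod_ite_zero, Finset.prod_const_one, Finset.mem_univ, true_imp_iff,
      forall_and, forall_eq]
    rfl
  simp only [factor]
  rw [rpExpect_prod q fun j s =>
    if (C j = none ∨ s = none ∨ s = C j) ∧ (j = i → s = none) then 1 else 0]
  have hmem : i ∈ ({j | C j ≠ none} : Finset (Fin n)) := by simpa using hi
  rw [← Finset.mul_prod_erase _ _ (Finset.mem_univ i), clauseWidth, ← Finset.card_erase_of_mem hmem,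
    ← Finset.prod_const, ← Finset.filter_erase, Finset.prod_filter]
  congr 1
  · simp
  · refine Finset.prod_congr rfl fun j hj => ?_
    have hji : j ≠ i := Finset.ne_of_mem_erase hj
    rcases C j with _ | _ | _ <;> simp [hji] <;> ring

theorem rpExpect_compatible_compRestriction {q : ℝ} (hq : q ≠ 1) (C : Fin n → Option Bool)
    (G : (Fin n → Option Bool) → ℝ) :
    rpExpect q (fun ρ => if Compatible ρ C then G (compRestriction C ρ) else 0) =
      ((1 + q) / (1 - q)) ^ clauseWidth C *
        rpExpect q (fun ρ => if Extends ρ C then G ρ else 0) := by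
  let w : Fin n → Option Bool → ℝ := fun i s =>
    if C i = none ∨ s = none ∨ s = C i then if s = none then q else (1 - q) / 2 else 0
  have compatible_weight (ρ : Fin n → Option Bool) :
      ∏ i, w i (ρ i) = if Compatible ρ C then rpWeight q ρ else 0 := by
    simp only [w, Finset.prod_ite_zero, Finset.mem_univ, true_imp_iff]
    rfl
  -- On a literal of `C` the compatible values weigh `q + (1 - q) / 2 = (1 + q) / 2` in total,
  -- against `(1 - q) / 2` for the satisfying one: hence the factor `(1 + q) / (1 - q)`.
  have fiber_weight (τ : Fin n → Option Bool) :
      ∏ i, ∑ s with (C i).or s = τ i, w i s =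
        if Extends τ C then ((1 + q) / (1 - q)) ^ clauseWidth C * rpWeight q τ else 0 := by
    have hq' : 1 - q ≠ 0 := sub_ne_zero.2 hq.symm
    rw [clauseWidth, ← Finset.prod_const, Finset.prod_filter, rpWeight, ← Finset.prod_mul_distrib]
    trans ∏ i, if C i = none ∨ τ i = C i then (if C i ≠ none then (1 + q) / (1 - q) else 1) *
      (if τ i = none then q else (1 - q) / 2) else 0
    · refine Finset.prod_congr rfl fun i _ => ?_
      simp only [w, Finset.sum_filter, Fintype.sum_option]
      rcases C i with _ | _ | _ <;> rcases τ i with _ | _ | _ <;> simp <;> field_simp <;> ring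
    · simp only [Finset.prod_ite_zero, Finset.mem_univ, true_imp_iff]
      rfl
  have pushforward : ∑ ρ : Fin n → Option Bool, (∏ i, w i (ρ i)) * G (compRestriction C ρ) =
      ∑ τ : Fin n → Option Bool, (∏ i, ∑ s with (C i).or s = τ i, w i s) * G τ :=
    sum_prod_mul_comp w (fun i s => (C i).or s) G
  simp only [compatible_weight, fiber_weight] at pushforward
  simpa only [rpExpect, Finset.mul_sum, mul_ite, ite_mul, mul_zero, zero_mul,
    mul_assoc] using pushforward

theorem rpExpect_half_clauseWidth_restrictClause_le (C : Fin n → Option Bool) :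
    rpExpect (1 / 2) (fun τ => if Compatible τ C then (clauseWidth (restrictClause τ C) : ℝ) else 0)
      ≤ 1 := by
  have surviving_literals (τ : Fin n → Option Bool) :
      (if Compatible τ C then (clauseWidth (restrictClause τ C) : ℝ) else 0) =
        ∑ i with C i ≠ none, if Compatible τ C ∧ τ i = none then 1 else 0 := by
    by_cases h : Compatible τ C
    · simp [h, clauseWidth, restrictClause, Finset.filter_filter, and_comm]
    · simp [h]
  simp only [surviving_literals, rpExpect_sum]
  rw [Finset.sum_congr rfl fun i hi =>
    rpExpect_compatible_and_eq_none _ (Finset.mem_filter.1 hi).2, Finset.sum_const, nsmul_eq_mul]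
  have bound := mul_three_quarters_pow_le_two (clauseWidth C)
  rw [clauseWidth] at bound ⊢
  norm_num
  linarith

end Clause

section DecisionList

variable {n : ℕ} {κ : Type*}

/-- Clause `l` of the decision list `C` is reachable under the restriction `ρ`: on some input
consistent with `ρ` it is the first satisfied clause. -/
def Reachable [Preorder κ] (C : κ → Fin n → Option Bool) (ρ : Fin n → Option Bool) (l : κ) : Prop :=
  ∃ x, IsLeast {j | andClauseSat (C j) (applyRestriction ρ x)} l

noncomputable instance [Preorder κ] (C : κ → Fin n → Option Bool) (ρ : Fin n → Option Bool) :
    DecidablePred (Reachable C ρ) :=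
  Classical.decPred _

section Preorder

variable [Preorder κ] {C : κ → Fin n → Option Bool} {ρ : Fin n → Option Bool} {l : κ}

theorem Reachable.compatible (h : Reachable C ρ l) : Compatible ρ (C l) := by
  obtain ⟨x, hsat, -⟩ := h
  exact ((andClauseSat_applyRestriction _ _ _).1 hsat).1

theorem Reachable.compRestriction (h : Reachable C ρ l) :
    Reachable C (compRestriction (C l) ρ) l := by
  obtain ⟨x, hx⟩ := h
  refine ⟨x, ?_⟩
  rwa [applyRestriction_compRestriction_of_andClauseSat hx.1]

theorem Reachable.le_of_extends {l' : κ} (h : Reachable C ρ l) (h' : Extends ρ (C l')) :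
    l ≤ l' := by
  obtain ⟨x, -, hmin⟩ := h
  exact hmin (h'.andClauseSat x)

theorem rpExpect_reachable_le {q : ℝ} (hq0 : 0 ≤ q) (hq1 : q < 1) (C : κ → Fin n → Option Bool)
    (l : κ) :
    rpExpect q (fun ρ => if Reachable C ρ l then 1 else 0) ≤
      ((1 + q) / (1 - q)) ^ clauseWidth (C l) *
        rpExpect q (fun ρ => if Extends ρ (C l) ∧ Reachable C ρ l then 1 else 0) := by
  simp only [ite_and]
  rw [← rpExpect_compatible_compRestriction hq1.ne]
  refine rpExpect_mono hq0 hq1.le fun ρ => ?_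
  by_cases h : Reachable C ρ l
  · simp [h, h.compatible, h.compRestriction]
  · simp only [h, if_false]
    positivity

theorem rpExpect_reachable_le_rpow {q : ℝ} (hq0 : 0 ≤ q) (hq1 : q ≤ 1)
    (C : κ → Fin n → Option Bool) (l : κ) :
    rpExpect q (fun ρ => if Reachable C ρ l then 1 else 0) ≤
      rpExpect q (fun ρ => if Extends ρ (C l) ∧ Reachable C ρ l then 1 else 0) ^
        (1 - gamma q) := by
  rcases hq1.eq_or_lt with rfl | hlt
  · simpa [gamma] using rpExpect_le_one zero_le_one le_rfl fun ρ => by split_ifs <;> norm_num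
  set b := rpExpect q fun ρ => if Extends ρ (C l) ∧ Reachable C ρ l then (1 : ℝ) else 0
  have hb0 : 0 ≤ b := rpExpect_nonneg hq0 hq1 fun ρ => by positivity
  have hb_le : b ≤ ((1 - q) / 2) ^ clauseWidth (C l) := by
    rw [← rpExpect_extends]
    exact rpExpect_mono hq0 hq1 fun ρ => by split_ifs <;> simp_all
  have reachable_le : rpExpect q (fun ρ => if Reachable C ρ l then 1 else 0) ≤
      ((1 + q) / (1 - q)) ^ clauseWidth (C l) * b := rpExpect_reachable_le hq0 hlt C l
  rcases hb0.eq_or_lt with hb | hb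
  · rw [← hb, mul_zero] at reachable_le
    exact reachable_le.trans (Real.rpow_nonneg hb0 _)
  have hβ : 0 ≤ (1 - q) / 2 := by linarith
  have blowup_le : ((1 + q) / (1 - q)) ^ clauseWidth (C l) ≤ b ^ (-gamma q) :=
    calc ((1 + q) / (1 - q)) ^ clauseWidth (C l)
        = (((1 - q) / 2) ^ clauseWidth (C l)) ^ (-gamma q) := by
          rw [← rpow_neg_gamma (by linarith) hlt, Real.rpow_pow_comm hβ]
      _ ≤ b ^ (-gamma q) :=
          Real.rpow_le_rpow_of_nonpos hb hb_le (neg_nonpos.2 (gamma_nonneg hq0 hq1))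
  calc rpExpect q (fun ρ => if Reachable C ρ l then 1 else 0)
      ≤ ((1 + q) / (1 - q)) ^ clauseWidth (C l) * b := reachable_le
    _ ≤ b ^ (-gamma q) * b := by gcongr
    _ = b ^ (1 - gamma q) := by rw [sub_eq_neg_add, Real.rpow_add hb, Real.rpow_one]

end Preorder

theorem sum_rpExpect_extends_reachable_le_one [Fintype κ] [PartialOrder κ] {q : ℝ} (hq0 : 0 ≤ q)
    (hq1 : q ≤ 1) (C : κ → Fin n → Option Bool) :
    ∑ l, rpExpect q (fun ρ => if Extends ρ (C l) ∧ Reachable C ρ l then 1 else 0) ≤ 1 := by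
  classical
  rw [← rpExpect_sum]
  refine rpExpect_le_one hq0 hq1 fun ρ => ?_
  simp only [Finset.sum_boole]
  have unique : ({l | Extends ρ (C l) ∧ Reachable C ρ l} : Finset κ).card ≤ 1 := by
    simp only [Finset.card_le_one, Finset.mem_filter_univ]
    intro l hl l' hl'
    exact le_antisymm (hl.2.le_of_extends hl'.1) (hl'.2.le_of_extends hl.1)
  exact_mod_cast unique

theorem rpExpect_card_reachable_le [Fintype κ] [PartialOrder κ] {q : ℝ} (hq0 : 0 ≤ q) (hq1 : q ≤ 1)
    (C : κ → Fin n → Option Bool) :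
    rpExpect q (fun ρ => (({l | Reachable C ρ l} : Finset κ).card : ℝ)) ≤
      (Fintype.card κ : ℝ) ^ gamma q := by
  simp only [← Finset.sum_boole, rpExpect_sum]
  refine (Finset.sum_le_sum fun l _ => rpExpect_reachable_le_rpow hq0 hq1 C l).trans ?_
  exact sum_rpow_one_sub_le Finset.univ
    (fun l _ => rpExpect_nonneg hq0 hq1 fun ρ => by positivity)
    (sum_rpExpect_extends_reachable_le_one hq0 hq1 C) (gamma_nonneg hq0 hq1)
    (gamma_le_one (by linarith) hq1)

theorem exists_reachable_of_andClauseSat [LinearOrder κ] [WellFoundedLT κ]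
    {C : κ → Fin n → Option Bool} {ρ : Fin n → Option Bool} {x : Fin n → Bool} {j : κ}
    (hj : andClauseSat (C j) (applyRestriction ρ x)) :
    ∃ l ≤ j, Reachable C ρ l ∧ andClauseSat (C l) (applyRestriction ρ x) := by
  obtain ⟨l, hl, hmin⟩ :=
    wellFounded_lt.has_min {l | andClauseSat (C l) (applyRestriction ρ x)} ⟨j, hj⟩
  have hleast : IsLeast {l | andClauseSat (C l) (applyRestriction ρ x)} l :=
    ⟨hl, fun k hk => not_lt.1 (hmin k hk)⟩
  exact ⟨l, hleast.2 hj, ⟨x, hleast⟩, hl⟩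

end DecisionList

section Depth2

variable {n : ℕ}

/-- The disjunction of the conjunctive clauses in `F` computes `f`. -/
def IsDNF (F : List (Fin n → Option Bool)) (f : (Fin n → Bool) → Bool) : Prop :=
  ∀ x, f x = true ↔ ∃ C ∈ F, andClauseSat C x

/-- The conjunction of the disjunctive clauses in `F` computes `f`. -/
def IsCNF (F : List (Fin n → Option Bool)) (f : (Fin n → Bool) → Bool) : Prop :=
  ∀ x, f x = true ↔ ∀ C ∈ F, orClauseSat C x

/-- The minimum of `cost` over the depth-2 formulas (DNFs and CNFs) computing `f`. It unfolds to
`L2size` when `cost` is the number of literal occurrences. -/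
noncomputable def depth2Size (cost : List (Fin n → Option Bool) → ℕ)
    (f : (Fin n → Bool) → Bool) : ℕ :=
  sInf {m | (∃ F, IsDNF F f ∧ cost F = m) ∨ ∃ F, IsCNF F f ∧ cost F = m}

/-- The number of literal occurrences of a depth-2 formula. -/
def leafSize (F : List (Fin n → Option Bool)) : ℕ :=
  (F.map clauseWidth).sum

/-- `F₂(f)`: the minimum number of clauses of a DNF or a CNF computing `f`. -/
noncomputable def F2size (f : (Fin n → Bool) → Bool) : ℕ :=
  depth2Size List.length f

/-- The clause with every literal negated, as in De Morgan's laws. -/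
def negClause (C : Fin n → Option Bool) : Fin n → Option Bool :=
  fun i => (C i).map (!·)

theorem andClauseSat_negClause (C : Fin n → Option Bool) (x : Fin n → Bool) :
    andClauseSat (negClause C) x ↔ ¬orClauseSat C x := by
  simp only [andClauseSat, orClauseSat, negClause, not_exists]
  refine forall_congr' fun i => ?_
  rcases C i with _ | _ | _ <;> simp

theorem orClauseSat_negClause (C : Fin n → Option Bool) (x : Fin n → Bool) :
    orClauseSat (negClause C) x ↔ ¬andClauseSat C x := by
  simp only [andClauseSat, orClauseSat, negClause, not_forall]
  refine exists_congr fun i => ?_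
  rcases C i with _ | _ | _ <;> simp

variable {F : List (Fin n → Option Bool)} {f : (Fin n → Bool) → Bool}

theorem IsDNF.not (h : IsDNF F f) : IsCNF (F.map negClause) (fun x => !f x) := by
  intro x
  rw [Bool.not_eq_true', ← Bool.not_eq_true, h x]
  simp [orClauseSat_negClause]

theorem IsCNF.not (h : IsCNF F f) : IsDNF (F.map negClause) (fun x => !f x) := by
  intro x
  rw [Bool.not_eq_true', ← Bool.not_eq_true, h x]
  simp [andClauseSat_negClause]

theorem leafSize_map_negClause (F : List (Fin n → Option Bool)) :
    leafSize (F.map negClause) = leafSize F := by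
  have width_eq (C : Fin n → Option Bool) : clauseWidth (negClause C) = clauseWidth C := by
    simp [clauseWidth, negClause]
  simp [leafSize, Function.comp_def, width_eq]

theorem exists_isDNF (f : (Fin n → Bool) → Bool) : ∃ F, IsDNF F f := by
  refine ⟨({y | f y = true} : Finset _).toList.map fun y i => some (y i), fun x => ?_⟩
  have sat_iff (y : Fin n → Bool) : andClauseSat (fun i => some (y i)) x ↔ x = y := by
    simp [andClauseSat, funext_iff]
  simp [sat_iff]

section depth2Size

variable {cost : List (Fin n → Option Bool) → ℕ}

theorem IsDNF.depth2Size_le (h : IsDNF F f) : depth2Size cost f ≤ cost F :=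
  Nat.sInf_le (Or.inl ⟨F, h, rfl⟩)

theorem IsCNF.depth2Size_le (h : IsCNF F f) : depth2Size cost f ≤ cost F :=
  Nat.sInf_le (Or.inr ⟨F, h, rfl⟩)

theorem exists_cost_eq_depth2Size (cost : List (Fin n → Option Bool) → ℕ)
    (f : (Fin n → Bool) → Bool) :
    (∃ F, IsDNF F f ∧ cost F = depth2Size cost f) ∨ ∃ F, IsCNF F f ∧ cost F = depth2Size cost f :=
  let ⟨F, hF⟩ := exists_isDNF f
  Nat.sInf_mem (s := {m | (∃ F, IsDNF F f ∧ cost F = m) ∨ ∃ F, IsCNF F f ∧ cost F = m})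
    ⟨cost F, Or.inl ⟨F, hF, rfl⟩⟩

theorem depth2Size_not (hcost : ∀ F, cost (F.map negClause) = cost F) (f : (Fin n → Bool) → Bool) :
    depth2Size cost (fun x => !f x) = depth2Size cost f := by
  have not_le (g : (Fin n → Bool) → Bool) :
      depth2Size cost (fun x => !g x) ≤ depth2Size cost g := by
    rcases exists_cost_eq_depth2Size cost g with ⟨F, hF, hsize⟩ | ⟨F, hF, hsize⟩
    · exact hF.not.depth2Size_le.trans_eq ((hcost F).trans hsize)
    · exact hF.not.depth2Size_le.trans_eq ((hcost F).trans hsize)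
  exact le_antisymm (not_le f) (by simpa using not_le fun x => !f x)

theorem depth2Size_induction (hcost : ∀ F, cost (F.map negClause) = cost F)
    {P : ((Fin n → Bool) → Bool) → Prop} (not : ∀ f, P (fun x => !f x) → P f)
    (dnf : ∀ f F, IsDNF F f → cost F = depth2Size cost f → P f) (f : (Fin n → Bool) → Bool) :
    P f := by
  rcases exists_cost_eq_depth2Size cost f with ⟨F, hF, hsize⟩ | ⟨F, hF, hsize⟩
  · exact dnf f F hF hsize
  · exact not f (dnf _ _ hF.not (by rw [hcost, hsize, depth2Size_not hcost]))

theorem depth2Size_le_of_forall_iff_exists_mem {κ : Type*} (s : Finset κ)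
    (C : κ → Fin n → Option Bool) (h : ∀ x, f x = true ↔ ∃ l ∈ s, andClauseSat (C l) x) :
    depth2Size cost f ≤ cost (s.toList.map C) :=
  IsDNF.depth2Size_le fun x => by simp [h]

end depth2Size

theorem F2size_not (f : (Fin n → Bool) → Bool) : F2size (fun x => !f x) = F2size f :=
  depth2Size_not (fun _ => List.length_map _) f

theorem L2size_not (f : (Fin n → Bool) → Bool) : L2size (fun x => !f x) = L2size f :=
  depth2Size_not leafSize_map_negClause f

theorem F2size_eq_zero_of_forall_eq_true (h : ∀ x, f x = true) : F2size f = 0 :=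
  Nat.le_zero.1 (IsCNF.depth2Size_le (F := []) fun x => by simp [h])

theorem andClauseSat_of_clauseWidth_eq_zero {C : Fin n → Option Bool} (h : clauseWidth C = 0)
    (x : Fin n → Bool) : andClauseSat C x := by
  have hC : ∀ i, C i = none := by simpa [clauseWidth, Finset.filter_eq_empty_iff] using h
  simp [andClauseSat, hC]

theorem F2size_le_L2size (f : (Fin n → Bool) → Bool) : F2size f ≤ L2size f := by
  induction f using depth2Size_induction leafSize_map_negClause with
  | not f ih => rwa [F2size_not, L2size_not] at ih
  | dnf f F hF hsize =>
    by_cases hempty : ∃ C ∈ F, clauseWidth C = 0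
    · obtain ⟨C, hC, hwidth⟩ := hempty
      rw [F2size_eq_zero_of_forall_eq_true fun x =>
        (hF x).2 ⟨C, hC, andClauseSat_of_clauseWidth_eq_zero hwidth x⟩]
      exact Nat.zero_le _
    · push Not at hempty
      calc F2size f ≤ F.length := hF.depth2Size_le
        _ = (F.map clauseWidth).length := (List.length_map _).symm
        _ ≤ leafSize F := List.length_le_sum_of_one_le _ fun w hw => by
            obtain ⟨C, hC, rfl⟩ := List.mem_map.1 hw
            exact Nat.one_le_iff_ne_zero.2 (hempty C hC)
        _ = L2size f := hsize

theorem IsDNF.iff_exists_get (hF : IsDNF F f) (x : Fin n → Bool) :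
    f x = true ↔ ∃ l, andClauseSat (F.get l) x := by
  rw [hF x, List.exists_mem_iff_get]

theorem IsDNF.L2size_restrictFun_le (hF : IsDNF F f) (τ : Fin n → Option Bool) :
    L2size (restrictFun f τ) ≤
      ∑ l, if Compatible τ (F.get l) then clauseWidth (restrictClause τ (F.get l)) else 0 := by
  refine (depth2Size_le_of_forall_iff_exists_mem (cost := leafSize) {l | Compatible τ (F.get l)}
    (fun l => restrictClause τ (F.get l)) fun x => ?_).trans_eq ?_
  · simp only [Finset.mem_filter_univ, ← andClauseSat_applyRestriction]
    exact hF.iff_exists_get _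
  · rw [leafSize, List.map_map, Finset.sum_map_toList, Finset.sum_filter]
    rfl

theorem rpExpect_half_L2size_le_F2size (g : (Fin n → Bool) → Bool) :
    rpExpect (1 / 2) (fun τ => (L2size (restrictFun g τ) : ℝ)) ≤ F2size g := by
  induction g using depth2Size_induction (cost := List.length) (fun _ => List.length_map _) with
  | not g ih =>
    have restrict_not (τ : Fin n → Option Bool) :
        L2size (restrictFun (fun x => !g x) τ) = L2size (restrictFun g τ) :=
      L2size_not (restrictFun g τ)
    simpa only [restrict_not, F2size_not] using ih
  | dnf g G hG hsize =>
    calc rpExpect (1 / 2) (fun τ => (L2size (restrictFun g τ) : ℝ))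
        ≤ rpExpect (1 / 2) (fun τ => ∑ l, if Compatible τ (G.get l) then
            (clauseWidth (restrictClause τ (G.get l)) : ℝ) else 0) :=
          rpExpect_mono (by norm_num) (by norm_num) fun τ => by
            exact_mod_cast hG.L2size_restrictFun_le τ
      _ = ∑ l, rpExpect (1 / 2) (fun τ => if Compatible τ (G.get l) then
            (clauseWidth (restrictClause τ (G.get l)) : ℝ) else 0) := rpExpect_sum ..
      _ ≤ ∑ _l : Fin G.length, 1 :=
          Finset.sum_le_sum fun l _ => rpExpect_half_clauseWidth_restrictClause_le (G.get l)
      _ = F2size g := by simp [F2size, ← hsize]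

/-- The clauses of `F` in order, followed by the empty conjunctive clause, which every input
satisfies. -/
def toDecisionList (F : List (Fin n → Option Bool)) : Fin (F.length + 1) → Fin n → Option Bool :=
  Fin.snoc F.get fun _ => none

theorem toDecisionList_castSucc (F : List (Fin n → Option Bool)) (l : Fin F.length) :
    toDecisionList F l.castSucc = F.get l :=
  Fin.snoc_castSucc ..

theorem andClauseSat_toDecisionList_last (F : List (Fin n → Option Bool)) (x : Fin n → Bool) :
    andClauseSat (toDecisionList F (Fin.last _)) x := by
  simp [toDecisionList, andClauseSat]

theorem IsDNF.F2size_restrictFun_le_card_reachable (hF : IsDNF F f) (σ : Fin n → Option Bool) :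
    F2size (restrictFun f σ) ≤
      ({l | Reachable (toDecisionList F) σ (Fin.castSucc l)} : Finset (Fin F.length)).card := by
  refine (depth2Size_le_of_forall_iff_exists_mem _ (fun l => restrictClause σ (F.get l))
    fun x => ?_).trans_eq ((List.length_map _).trans (Finset.length_toList _))
  simp only [Finset.mem_filter_univ]
  refine (hF.iff_exists_get (applyRestriction σ x)).trans ⟨?_, ?_⟩
  · rintro ⟨j, hj⟩
    rw [← toDecisionList_castSucc] at hj
    obtain ⟨l, hlj, hreach, hsat⟩ := exists_reachable_of_andClauseSat hj
    obtain ⟨l, rfl⟩ := Fin.exists_castSucc_eq.2 (hlj.trans_lt (Fin.castSucc_lt_last j)).ne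
    rw [toDecisionList_castSucc] at hsat
    exact ⟨l, hreach, ((andClauseSat_applyRestriction _ _ _).1 hsat).2⟩
  · rintro ⟨l, hreach, hsat⟩
    have hcompat := hreach.compatible
    rw [toDecisionList_castSucc] at hcompat
    exact ⟨l, (andClauseSat_applyRestriction _ _ _).2 ⟨hcompat, hsat⟩⟩

theorem IsDNF.restrictFun_eq_true_of_not_reachable_last (hF : IsDNF F f) {σ : Fin n → Option Bool}
    (h : ¬Reachable (toDecisionList F) σ (Fin.last _)) (x : Fin n → Bool) :
    restrictFun f σ x = true := by
  obtain ⟨l, -, hreach, hsat⟩ :=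
    exists_reachable_of_andClauseSat (andClauseSat_toDecisionList_last F (applyRestriction σ x))
  obtain ⟨l, rfl⟩ := Fin.exists_castSucc_eq.2 (show l ≠ Fin.last _ by rintro rfl; exact h hreach)
  rw [toDecisionList_castSucc] at hsat
  exact (hF.iff_exists_get _).2 ⟨l, hsat⟩

theorem IsDNF.F2size_restrictFun_add_one_le (hF : IsDNF F f) (σ : Fin n → Option Bool) :
    F2size (restrictFun f σ) + 1 ≤
      ({l | Reachable (toDecisionList F) σ l} : Finset (Fin (F.length + 1))).card := by
  by_cases hlast : Reachable (toDecisionList F) σ (Fin.last _)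
  · rw [Finset.card_filter, Fin.sum_univ_castSucc, if_pos hlast, ← Finset.card_filter]
    exact Nat.add_le_add_right (hF.F2size_restrictFun_le_card_reachable σ) 1
  · rw [F2size_eq_zero_of_forall_eq_true (hF.restrictFun_eq_true_of_not_reachable_last hlast),
      zero_add, Nat.one_le_iff_ne_zero, Finset.card_ne_zero]
    obtain ⟨l, -, hreach, -⟩ := exists_reachable_of_andClauseSat
      (andClauseSat_toDecisionList_last F (applyRestriction σ fun _ => true))
    exact ⟨l, Finset.mem_filter_univ l |>.2 hreach⟩

theorem rpExpect_F2size_add_one_le {q : ℝ} (hq0 : 0 ≤ q) (hq1 : q ≤ 1)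
    (f : (Fin n → Bool) → Bool) :
    rpExpect q (fun σ => (F2size (restrictFun f σ) : ℝ) + 1) ≤ ((F2size f : ℝ) + 1) ^ gamma q := by
  induction f using depth2Size_induction (cost := List.length) (fun _ => List.length_map _) with
  | not f ih =>
    have restrict_not (σ : Fin n → Option Bool) :
        F2size (restrictFun (fun x => !f x) σ) = F2size (restrictFun f σ) :=
      F2size_not (restrictFun f σ)
    simpa only [restrict_not, F2size_not] using ih
  | dnf f F hF hsize =>
    calc rpExpect q (fun σ => (F2size (restrictFun f σ) : ℝ) + 1)
        ≤ rpExpect q (fun σ => (({l | Reachable (toDecisionList F) σ l} : Finset _).card : ℝ)) :=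
          rpExpect_mono hq0 hq1 fun σ => by exact_mod_cast hF.F2size_restrictFun_add_one_le σ
      _ ≤ (Fintype.card (Fin (F.length + 1)) : ℝ) ^ gamma q := rpExpect_card_reachable_le hq0 hq1 _
      _ = ((F2size f : ℝ) + 1) ^ gamma q := by simp [F2size, ← hsize]

theorem depth2_leafsize_shrinkage_general (f : (Fin n → Bool) → Bool) {p : ℝ} (hp0 : 0 ≤ p)
    (hp1 : p ≤ 1 / 2) :
    rpExpect p (fun ρ => (L2size (restrictFun f ρ) : ℝ) + 1) ≤
      ((F2size f : ℝ) + 1) ^ gamma (2 * p) := by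
  have hq0 : 0 ≤ 2 * p := by linarith
  have hq1 : 2 * p ≤ 1 := by linarith
  have split : 2 * p * (1 / 2) = p := by ring
  calc rpExpect p (fun ρ => (L2size (restrictFun f ρ) : ℝ) + 1)
      = rpExpect (2 * p) (fun σ => rpExpect (1 / 2) (fun τ =>
          (L2size (restrictFun (restrictFun f σ) τ) : ℝ)) + 1) := by
        simp only [← rpExpect_add_one, ← restrictFun_compRestriction]
        rw [rpExpect_compRestriction _ _ fun ρ => (L2size (restrictFun f ρ) : ℝ) + 1, split]
    _ ≤ rpExpect (2 * p) (fun σ => (F2size (restrictFun f σ) : ℝ) + 1) :=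
        rpExpect_mono hq0 hq1 fun σ => by grw [rpExpect_half_L2size_le_F2size]
    _ ≤ ((F2size f : ℝ) + 1) ^ gamma (2 * p) := rpExpect_F2size_add_one_le hq0 hq1 f

end Depth2

/-- Shrinkage of depth-2 formula leaf-size: for `p ∈ [0,1/2]`,
`E[L₂(f↾R_p) + 1] ≤ (L₂(f) + 1)^{γ(2p)}`. -/
theorem depth2_leafsize_shrinkage {n : ℕ} (f : (Fin n → Bool) → Bool) (p : ℝ)
    (hp0 : 0 ≤ p) (hp1 : p ≤ 1 / 2) :
    ∑ ρ : Fin n → Option Bool, rpWeight p ρ * ((L2size (restrictFun f ρ) : ℝ) + 1)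
      ≤ ((L2size f : ℝ) + 1) ^ gamma (2 * p) := by
  have hγ : 0 ≤ gamma (2 * p) := gamma_nonneg (by linarith) (by linarith)
  grw [← F2size_le_L2size f]
  exact depth2_leafsize_shrinkage_general f hp0 hp1
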